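/- Let T > 0, α ∈ (1/2, 1), and let c_α ∈ (0, π/2] satisfy sin(2c_α)/(2c_α) = α². Let u : [0,1] × [0,T] → ℝ be a solution of u_t = u_{xx} + (1/x)u_x − sin(2u)/(2x²) on (0,1] × (0,T] with u(x,0) = u₀(x), u(0,t) = u(1,t) = 0 for t ∈ [0,T], such that the partial derivatives ∂ʲu/∂xʲ for 0 ≤ j ≤ 4 and ∂ʲu/∂tʲ for 0 ≤ j ≤ 2 exist and are bounded on [0,1] × [0,T], and assume sup_{x∈[0,1]} |u(x,0)| ≤ c_α. Then there exists a constant c > 0 such that for all N ≥ 1 and M ≥ 1, with h = 1/(N+1), Δt = T/M, grid points x_i = i·h, discrete initial data u⁰ = (u(x_1,0),…,u(x_N,0))ᵀ, uⁿ the iterates of the semi-implicit Euler scheme, and discretization error eⁿ := (u(x_1, nΔt),…,u(x_N, nΔt))ᵀ − uⁿ, one has ‖eⁿ‖_{D,h} ≤ c·(Δt + h²·|ln h|^{1/2}) for all 1 ≤ n ≤ M. -/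

import Mathlib

open Real Matrix

noncomputable section

/-- Mesh size `h = 1/(N+1)`. -/
def hmesh (N : ℕ) : ℝ := 1 / (N + 1)

/-- Grid points `x_i = i·h`, `i = 1,…,N` (here `i : Fin N` corresponds to `i+1`). -/
def gridx (N : ℕ) (i : Fin N) : ℝ := ((i : ℕ) + 1) * hmesh N

/-- `A = (1/h²)·tridiag(−1,2,−1)`. -/
def matA (N : ℕ) : Matrix (Fin N) (Fin N) ℝ := fun i j =>
  (1 / (hmesh N) ^ 2) *
    (if (i : ℕ) = (j : ℕ) then 2
     else if (i : ℕ) + 1 = (j : ℕ) ∨ (j : ℕ) + 1 = (i : ℕ) then -1 else 0)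

/-- `B = (1/(2h))·tridiag(−1,0,1)`. -/
def matB (N : ℕ) : Matrix (Fin N) (Fin N) ℝ := fun i j =>
  (1 / (2 * hmesh N)) *
    (if (i : ℕ) + 1 = (j : ℕ) then 1
     else if (j : ℕ) + 1 = (i : ℕ) then -1 else 0)

/-- `D = diag(x_1,…,x_N)`. -/
def matD (N : ℕ) : Matrix (Fin N) (Fin N) ℝ := Matrix.diagonal (gridx N)

/-- `D^β = diag(x_1^β,…,x_N^β)` (real powers). -/
def matDpow (N : ℕ) (β : ℝ) : Matrix (Fin N) (Fin N) ℝ :=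
  Matrix.diagonal (fun i => gridx N i ^ β)

/-- `C = A − D⁻¹B`. -/
def matC (N : ℕ) : Matrix (Fin N) (Fin N) ℝ :=
  matA N - Matrix.diagonal (fun i => (gridx N i)⁻¹) * matB N

/-- `g(y) = sin(2y)/(2y)` for `y ≠ 0`, `g(0) = 1`. -/
def gfun (y : ℝ) : ℝ := if y = 0 then 1 else Real.sin (2 * y) / (2 * y)

/-- `G(u) = diag(g(u_1),…,g(u_N))`. -/
def matG {N : ℕ} (u : Fin N → ℝ) : Matrix (Fin N) (Fin N) ℝ :=
  Matrix.diagonal (fun i => gfun (u i))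

/-- The matrix `I + Δt(C + G(v)D⁻²)` of the semi-implicit Euler scheme. -/
def stepMat (N : ℕ) (Δt : ℝ) (v : Fin N → ℝ) : Matrix (Fin N) (Fin N) ℝ :=
  1 + Δt • (matC N + matG v * matDpow N (-2))

/-- Operator norm of a matrix induced by the maximum norm on `ℝ^N`
(the Pi norm on `Fin N → ℝ` is the sup norm). -/
def opNormInf {N : ℕ} (M : Matrix (Fin N) (Fin N) ℝ) : ℝ :=
  ‖(LinearMap.toContinuousLinearMap (Matrix.mulVecLin M) :
      (Fin N → ℝ) →L[ℝ] (Fin N → ℝ))‖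

end

/-- Weighted discrete norm `‖v‖_{D,h} = (h Σ_i x_i v_i²)^{1/2}`. -/
noncomputable def normDh (N : ℕ) (v : Fin N → ℝ) : ℝ :=
  Real.sqrt (hmesh N * ∑ i, gridx N i * v i ^ 2)

/-- Taylor's inequality, around an arbitrary base point of `[a, b]`, for a function given with its
successive one-sided derivatives. -/
theorem abs_sub_taylor_le {a b K x : ℝ} (m : ℕ) (F : ℕ → ℝ → ℝ)
    (hF : ∀ j < m, ∀ y ∈ Set.Icc a b, HasDerivWithinAt (F j) (F (j + 1) y) (Set.Icc a b) y)
    (hK : ∀ y ∈ Set.Icc a b, |F m y| ≤ K) (hx : x ∈ Set.Icc a b) :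
    ∀ y ∈ Set.Icc a b,
      |F 0 y - ∑ k ∈ Finset.range m, F k x * ((y - x) ^ k / (k.factorial : ℝ))|
        ≤ K * |y - x| ^ m := by
  induction m generalizing F with
  | zero => intro y hy; simpa using hK y hy
  | succ m ih =>
    intro y hy
    have hK0 : 0 ≤ K := (abs_nonneg _).trans (hK x hx)
    have hsub : Set.uIcc x y ⊆ Set.Icc a b := Set.uIcc_subset_Icc hx hy
    have hderiv : ∀ z ∈ Set.uIcc x y, HasDerivWithinAt
        (fun w => F 0 w - ∑ k ∈ Finset.range (m + 1),
          F k x * ((w - x) ^ k / (k.factorial : ℝ)))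
        (F 1 z - ∑ k ∈ Finset.range m, F (k + 1) x * ((z - x) ^ k / (k.factorial : ℝ)))
        (Set.uIcc x y) z := by
      intro z hz
      refine ((hF 0 (by omega) z (hsub hz)).mono hsub).fun_sub ?_
      simp only [Finset.sum_range_succ' _ m, pow_zero]
      refine (HasDerivWithinAt.fun_sum (A := fun k w => F (k + 1) x *
        ((w - x) ^ (k + 1) / ((k + 1).factorial : ℝ))) fun k _ => ?_).add_const _
      refine HasDerivWithinAt.const_mul _ ?_
      have h := ((((hasDerivAt_id z).sub_const x).pow (k + 1)).div_const
        ((k + 1).factorial : ℝ)).hasDerivWithinAt (s := Set.uIcc x y)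
      have hval : ((k + 1 : ℕ) : ℝ) * (id z - x) ^ (k + 1 - 1) * 1 / ((k + 1).factorial : ℝ) =
          (z - x) ^ k / (k.factorial : ℝ) := by
        have := Nat.factorial_pos k
        simp only [Nat.factorial_succ, id, Nat.add_sub_cancel]
        push_cast
        field_simp
      rw [hval] at h
      exact h
    have hbound : ∀ z ∈ Set.uIcc x y,
        ‖F 1 z - ∑ k ∈ Finset.range m, F (k + 1) x * ((z - x) ^ k / (k.factorial : ℝ))‖
          ≤ K * |y - x| ^ m := by
      intro z hz
      have h := ih (fun j => F (j + 1)) (fun j hj => hF (j + 1) (by omega)) hK z (hsub hz)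
      refine h.trans ?_
      have := Set.abs_sub_left_of_mem_uIcc hz
      gcongr
    have h := (convex_uIcc x y).norm_image_sub_le_of_norm_hasDerivWithin_le hderiv hbound
      Set.left_mem_uIcc Set.right_mem_uIcc
    have h0 : F 0 x - ∑ k ∈ Finset.range (m + 1),
        F k x * ((x - x) ^ k / (k.factorial : ℝ)) = 0 := by
      simp [Finset.sum_range_succ']
    rw [h0, sub_zero, Real.norm_eq_abs, Real.norm_eq_abs, mul_assoc, ← pow_succ] at h
    exact h

/-- Taylor's inequality for a `C^m` function on `[a, b]`, in terms of `iteratedDerivWithin`. -/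
theorem ContDiffOn.abs_sub_taylor_le {a b K x y : ℝ} (hab : a < b) {f : ℝ → ℝ} (m : ℕ)
    (hf : ContDiffOn ℝ m f (Set.Icc a b))
    (hK : ∀ y ∈ Set.Icc a b, |iteratedDerivWithin m f (Set.Icc a b) y| ≤ K)
    (hx : x ∈ Set.Icc a b) (hy : y ∈ Set.Icc a b) :
    |f y - ∑ k ∈ Finset.range m,
      iteratedDerivWithin k f (Set.Icc a b) x * ((y - x) ^ k / (k.factorial : ℝ))|
        ≤ K * |y - x| ^ m := by
  have h := _root_.abs_sub_taylor_le m (fun j => iteratedDerivWithin j f (Set.Icc a b)) ?_ hK hx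
    y hy
  · simpa using h
  · intro j hj z hz
    rw [iteratedDerivWithin_succ]
    exact (hf.differentiableOn_iteratedDerivWithin (by exact_mod_cast hj)
      (uniqueDiffOn_Icc hab) z hz).hasDerivWithinAt

theorem gfun_eq_integral (y : ℝ) : gfun y = ∫ s in (0 : ℝ)..1, Real.cos (2 * y * s) := by
  unfold gfun
  split_ifs with hy
  · simp [hy]
  · rw [intervalIntegral.integral_comp_mul_left (fun s => Real.cos s) (by simpa using hy)]
    simp
    field_simp

theorem abs_gfun_sub_gfun_le (a b : ℝ) : |gfun a - gfun b| ≤ 2 * |a - b| := by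
  rw [gfun_eq_integral, gfun_eq_integral, ← intervalIntegral.integral_sub
    (Continuous.intervalIntegrable (by fun_prop) _ _)
    (Continuous.intervalIntegrable (by fun_prop) _ _)]
  have h := intervalIntegral.norm_integral_le_of_norm_le_const (a := (0 : ℝ)) (b := 1)
    (f := fun s => Real.cos (2 * a * s) - Real.cos (2 * b * s)) (C := 2 * |a - b|) ?_
  · simpa using h
  · intro s hs
    rw [Set.uIoc_of_le zero_le_one] at hs
    calc ‖Real.cos (2 * a * s) - Real.cos (2 * b * s)‖
        ≤ |2 * a * s - 2 * b * s| := abs_cos_sub_cos_le _ _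
      _ = 2 * |a - b| * s := by
          rw [show 2 * a * s - 2 * b * s = 2 * s * (a - b) by ring, abs_mul,
            abs_of_nonneg (by linarith [hs.1])]
          ring
      _ ≤ 2 * |a - b| := mul_le_of_le_one_right (by positivity) hs.2

theorem gfun_mul_self (y : ℝ) : gfun y * y = Real.sin (2 * y) / 2 := by
  unfold gfun
  split_ifs with hy
  · simp [hy]
  · field_simp

theorem le_gfun_of_abs_le {c y : ℝ} (hc : c ∈ Set.Ioc (0 : ℝ) (π / 2)) (hy : |y| ≤ c) :
    Real.sin (2 * c) / (2 * c) ≤ gfun y := by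
  have hc0 := hc.1
  have hc1 := hc.2
  unfold gfun
  split_ifs with h0
  · rw [div_le_one (by positivity)]
    exact Real.sin_le (by positivity)
  · have habs : Real.sin (2 * y) / (2 * y) = Real.sin (2 * |y|) / (2 * |y|) := by
      rcases abs_cases y with ⟨h, _⟩ | ⟨h, _⟩ <;> rw [h]
      rw [mul_neg, Real.sin_neg, neg_div_neg_eq]
    have hpos : 0 < |y| := abs_pos.2 h0
    rw [habs, div_le_div_iff₀ (by positivity) (by positivity)]
    have h := strictConcaveOn_sin_Icc.concaveOn.2
      (show (0 : ℝ) ∈ Set.Icc 0 π from ⟨le_rfl, Real.pi_pos.le⟩)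
      (show 2 * c ∈ Set.Icc 0 π from ⟨by positivity, by linarith⟩)
      (show 0 ≤ 1 - |y| / c by rw [sub_nonneg, div_le_one hc0]; exact hy)
      (show 0 ≤ |y| / c by positivity) (by ring)
    have he : |y| / c * (2 * c) = 2 * |y| := by field_simp
    simp only [smul_eq_mul, mul_zero, Real.sin_zero, zero_add, he] at h
    have := mul_le_mul_of_nonneg_right h (show 0 ≤ 2 * c by positivity)
    calc Real.sin (2 * c) * (2 * |y|) = |y| / c * Real.sin (2 * c) * (2 * c) := by
          field_simp
      _ ≤ _ := this

/-- The extension of a grid function by zero, indexed so that the value at `x_k` is at `k`. -/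
def zeroExt {N : ℕ} (v : Fin N → ℝ) (k : ℕ) : ℝ :=
  ∑ j : Fin N, if (j : ℕ) + 1 = k then v j else 0

theorem zeroExt_succ {N : ℕ} (v : Fin N → ℝ) (i : Fin N) : zeroExt v (i + 1) = v i := by
  simp [zeroExt, ← Fin.ext_iff]

@[simp] theorem zeroExt_zero {N : ℕ} (v : Fin N → ℝ) : zeroExt v 0 = 0 := by
  simp [zeroExt]

theorem zeroExt_top {N : ℕ} (v : Fin N → ℝ) : zeroExt v (N + 1) = 0 := by
  refine Finset.sum_eq_zero fun j _ => if_neg ?_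
  omega

theorem abs_zeroExt_le {N : ℕ} {v : Fin N → ℝ} {V : ℝ} (hV0 : 0 ≤ V) (hV : ∀ i, |v i| ≤ V)
    (k : ℕ) : |zeroExt v k| ≤ V := by
  by_cases h : ∃ i : Fin N, (i : ℕ) + 1 = k
  · obtain ⟨i, rfl⟩ := h
    rw [zeroExt_succ]
    exact hV i
  · push Not at h
    rw [zeroExt, Finset.sum_eq_zero fun j _ => if_neg (h j), abs_zero]
    exact hV0

theorem zeroExt_grid {N : ℕ} {w : ℝ → ℝ} (h0 : w 0 = 0) (h1 : w 1 = 0) {k : ℕ}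
    (hk : k ≤ N + 1) : zeroExt (fun i : Fin N => w (gridx N i)) k = w (k * hmesh N) := by
  rcases Nat.eq_zero_or_pos k with rfl | hpos
  · simp [h0]
  · rcases hk.eq_or_lt with rfl | hlt
    · rw [zeroExt_top, hmesh, Nat.cast_succ, mul_one_div_cancel (by positivity), h1]
    · have h := zeroExt_succ (fun i : Fin N => w (gridx N i)) ⟨k - 1, by omega⟩
      simp only [Nat.sub_add_cancel hpos] at h
      rw [h, gridx]
      congr 2
      push_cast [Nat.cast_sub hpos]
      ring

theorem hmesh_pos (N : ℕ) : 0 < hmesh N := by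
  unfold hmesh
  positivity

theorem gridx_pos (N : ℕ) (i : Fin N) : 0 < gridx N i :=
  mul_pos (by positivity) (hmesh_pos N)

theorem natCast_mul_hmesh_mem_Icc {N k : ℕ} (hk : k ≤ N + 1) :
    (k : ℝ) * hmesh N ∈ Set.Icc (0 : ℝ) 1 := by
  refine ⟨mul_nonneg k.cast_nonneg (hmesh_pos N).le, ?_⟩
  rw [hmesh, mul_one_div, div_le_one (by positivity)]
  exact_mod_cast hk

theorem gridx_mem_Icc (N : ℕ) (i : Fin N) : gridx N i ∈ Set.Icc (0 : ℝ) 1 := by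
  have h := natCast_mul_hmesh_mem_Icc (N := N) (k := i + 1) (by omega)
  rwa [Nat.cast_succ] at h

theorem matA_mulVec {N : ℕ} (v : Fin N → ℝ) (i : Fin N) :
    (matA N).mulVec v i =
      (2 * v i - zeroExt v i - zeroExt v (i + 2)) / hmesh N ^ 2 := by
  rw [← zeroExt_succ v i]
  simp only [zeroExt, Matrix.mulVec, dotProduct, matA, Finset.mul_sum, ← Finset.sum_sub_distrib,
    Finset.sum_div]
  refine Finset.sum_congr rfl fun j _ => ?_
  split_ifs <;> first | omega | ring

theorem matB_mulVec {N : ℕ} (v : Fin N → ℝ) (i : Fin N) :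
    (matB N).mulVec v i = (zeroExt v (i + 2) - zeroExt v i) / (2 * hmesh N) := by
  simp only [zeroExt, Matrix.mulVec, dotProduct, matB, ← Finset.sum_sub_distrib,
    Finset.sum_div]
  refine Finset.sum_congr rfl fun j _ => ?_
  split_ifs <;> first | omega | ring

theorem matC_mulVec {N : ℕ} (v : Fin N → ℝ) (i : Fin N) :
    (matC N).mulVec v i =
      (2 * v i - zeroExt v i - zeroExt v (i + 2)) / hmesh N ^ 2
        - (gridx N i)⁻¹ * ((zeroExt v (i + 2) - zeroExt v i) / (2 * hmesh N)) := by
  rw [matC, Matrix.sub_mulVec, Pi.sub_apply, ← Matrix.mulVec_mulVec, Matrix.mulVec_diagonal,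
    matA_mulVec, matB_mulVec]

theorem stepMat_mulVec {N : ℕ} (dt : ℝ) (w v : Fin N → ℝ) (i : Fin N) :
    (stepMat N dt w).mulVec v i =
      v i + dt * ((matC N).mulVec v i + gfun (w i) * v i / gridx N i ^ 2) := by
  simp only [stepMat, matG, matDpow, Matrix.add_mulVec, Matrix.one_mulVec, Matrix.smul_mulVec,
    Matrix.diagonal_mul_diagonal, Matrix.mulVec_diagonal, Pi.add_apply, Pi.smul_apply,
    smul_eq_mul]
  rw [Real.rpow_neg (gridx_pos N i).le, Real.rpow_two]
  ring

/-- The finite difference operator in divergence form. -/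
theorem gridx_mul_matC_mulVec {N : ℕ} (v : Fin N → ℝ) (i : Fin N) :
    gridx N i * (matC N).mulVec v i =
      ((2 * (i : ℝ) + 2) * v i - ((i : ℝ) + 1 / 2) * zeroExt v i
        - ((i : ℝ) + 3 / 2) * zeroExt v (i + 2)) / hmesh N := by
  have hh := hmesh_pos N
  have hi : (0 : ℝ) < (i : ℝ) + 1 := by positivity
  rw [matC_mulVec, gridx]
  field_simp
  ring

theorem sum_divergence_form_ge (V : ℕ → ℝ) (h0 : V 0 = 0) (n : ℕ) :
    ((n : ℝ) + 1 / 2) * V n * (V n - V (n + 1)) ≤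
      ∑ k ∈ Finset.range n, V (k + 1) * ((2 * (k : ℝ) + 2) * V (k + 1)
        - ((k : ℝ) + 1 / 2) * V k - ((k : ℝ) + 3 / 2) * V (k + 2)) := by
  induction n with
  | zero => simp [h0]
  | succ n ih =>
    rw [Finset.sum_range_succ]
    have := mul_nonneg (show (0 : ℝ) ≤ (n : ℝ) + 1 / 2 by positivity)
      (sq_nonneg (V (n + 1) - V n))
    push_cast
    linarith

/-- `C` is positive semidefinite with respect to the `D`-weighted inner product. -/
theorem sum_gridx_mul_matC_mulVec_nonneg {N : ℕ} (v : Fin N → ℝ) :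
    0 ≤ ∑ i, gridx N i * (matC N).mulVec v i * v i := by
  have h := sum_divergence_form_ge (zeroExt v) (zeroExt_zero v) N
  rw [zeroExt_top, sub_zero, mul_assoc] at h
  have h' := (mul_nonneg (show (0 : ℝ) ≤ (N : ℝ) + 1 / 2 by positivity)
    (mul_self_nonneg (zeroExt v N))).trans h
  rw [← Fin.sum_univ_eq_sum_range (fun k => zeroExt v (k + 1) *
    ((2 * (k : ℝ) + 2) * zeroExt v (k + 1) - ((k : ℝ) + 1 / 2) * zeroExt v k
      - ((k : ℝ) + 3 / 2) * zeroExt v (k + 2)))] at h'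
  refine (div_nonneg h' (hmesh_pos N).le).trans_eq ?_
  rw [Finset.sum_div]
  refine Finset.sum_congr rfl fun i _ => ?_
  rw [gridx_mul_matC_mulVec, zeroExt_succ]
  ring

/-- Discrete maximum principle for one step of the scheme. -/
theorem abs_le_of_stepMat_mulVec_eq {N : ℕ} {dt m : ℝ} (hdt : 0 ≤ dt) {w v r : Fin N → ℝ}
    (hg : ∀ i, 0 ≤ gfun (w i)) (heq : (stepMat N dt w).mulVec v = r) (hr : ∀ i, |r i| ≤ m) :
    ∀ i, |v i| ≤ m := by
  intro i₀
  obtain ⟨i, -, hi⟩ := Finset.exists_max_image Finset.univ (fun i => |v i|) ⟨i₀, by simp⟩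
  refine (hi i₀ (Finset.mem_univ _)).trans ?_
  have hx := gridx_pos N i
  have hh := hmesh_pos N
  have hext := abs_zeroExt_le (abs_nonneg (v i)) fun j => hi j (Finset.mem_univ _)
  have hrow := congrFun heq i
  rw [stepMat_mulVec] at hrow
  have hC : 0 ≤ (matC N).mulVec v i * v i := by
    have h1 : zeroExt v i * v i ≤ v i ^ 2 := by
      calc zeroExt v i * v i ≤ |zeroExt v i| * |v i| := by
            rw [← abs_mul]; exact le_abs_self _
        _ ≤ |v i| * |v i| := mul_le_mul_of_nonneg_right (hext _) (abs_nonneg _)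
        _ = v i ^ 2 := by rw [← sq, sq_abs]
    have h2 : zeroExt v (i + 2) * v i ≤ v i ^ 2 := by
      calc zeroExt v (i + 2) * v i ≤ |zeroExt v (i + 2)| * |v i| := by
            rw [← abs_mul]; exact le_abs_self _
        _ ≤ |v i| * |v i| := mul_le_mul_of_nonneg_right (hext _) (abs_nonneg _)
        _ = v i ^ 2 := by rw [← sq, sq_abs]
    have h3 : 0 ≤ gridx N i * (matC N).mulVec v i * v i := by
      rw [gridx_mul_matC_mulVec, div_mul_eq_mul_div]
      refine div_nonneg ?_ hh.le
      have e1 := mul_le_mul_of_nonneg_left h1 (show (0 : ℝ) ≤ (i : ℝ) + 1 / 2 by positivity)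
      have e2 := mul_le_mul_of_nonneg_left h2 (show (0 : ℝ) ≤ (i : ℝ) + 3 / 2 by positivity)
      linarith
    rw [mul_assoc] at h3
    exact nonneg_of_mul_nonneg_right h3 hx
  have hG : 0 ≤ gfun (w i) * v i / gridx N i ^ 2 * v i := by
    rw [div_mul_eq_mul_div, mul_assoc]
    exact div_nonneg (mul_nonneg (hg i) (mul_self_nonneg _)) (by positivity)
  have hsq : |v i| * |v i| ≤ |r i| * |v i| := by
    rw [← abs_mul (r i), ← sq, sq_abs]
    refine le_trans ?_ (le_abs_self _)
    rw [← hrow]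
    have := mul_nonneg hdt (add_nonneg hC hG)
    linarith
  rcases (abs_nonneg (v i)).eq_or_lt with h | h
  · rw [← h]
    exact (abs_nonneg _).trans (hr i)
  · exact (le_of_mul_le_mul_right hsq h).trans (hr i)

/-- Spatial consistency of the finite difference operator. -/
theorem abs_gridx_mul_matC_add_le {N : ℕ} {f : ℝ → ℝ} {K : ℝ} (h0 : f 0 = 0) (h1 : f 1 = 0)
    (hf : ContDiffOn ℝ 4 f (Set.Icc 0 1))
    (hK : ∀ x ∈ Set.Icc (0 : ℝ) 1, ∀ j ≤ 4, |iteratedDerivWithin j f (Set.Icc 0 1) x| ≤ K)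
    (i : Fin N) :
    |gridx N i * ((matC N).mulVec (fun j => f (gridx N j)) i
      + iteratedDerivWithin 2 f (Set.Icc 0 1) (gridx N i)
      + 1 / gridx N i * derivWithin f (Set.Icc 0 1) (gridx N i))| ≤ 3 * K * hmesh N ^ 2 := by
  have hh := hmesh_pos N
  have hx := gridx_pos N i
  have hxI := gridx_mem_Icc N i
  have hK0 : 0 ≤ K := (abs_nonneg _).trans (hK _ hxI 0 (by norm_num))
  have hq : ((i : ℕ) : ℝ) * hmesh N = gridx N i - hmesh N := by rw [gridx]; ring
  have hp : ((i + 2 : ℕ) : ℝ) * hmesh N = gridx N i + hmesh N := by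
    rw [gridx]; push_cast; ring
  have hqI := natCast_mul_hmesh_mem_Icc (N := N) (k := i) (by omega)
  have hpI := natCast_mul_hmesh_mem_Icc (N := N) (k := i + 2) (by omega)
  rw [matC_mulVec, zeroExt_grid h0 h1 (by omega), zeroExt_grid h0 h1 (by omega)]
  rw [hq] at hqI ⊢
  rw [hp] at hpI ⊢
  have hf3 : ContDiffOn ℝ (3 : ℕ) f (Set.Icc 0 1) := hf.of_le (by norm_num)
  have hf4 : ContDiffOn ℝ (4 : ℕ) f (Set.Icc 0 1) := hf
  have p4 := hf4.abs_sub_taylor_le zero_lt_one 4 (fun y hy => hK y hy 4 le_rfl) hxI hpI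
  have q4 := hf4.abs_sub_taylor_le zero_lt_one 4 (fun y hy => hK y hy 4 le_rfl) hxI hqI
  have p3 := hf3.abs_sub_taylor_le zero_lt_one 3 (fun y hy => hK y hy 3 (by norm_num)) hxI hpI
  have q3 := hf3.abs_sub_taylor_le zero_lt_one 3 (fun y hy => hK y hy 3 (by norm_num)) hxI hqI
  rw [add_sub_cancel_left, abs_of_pos hh, abs_le] at p4 p3
  rw [sub_sub_cancel_left, abs_neg, abs_of_pos hh, abs_le] at q4 q3
  simp only [Finset.sum_range_succ, Finset.sum_range_zero, iteratedDerivWithin_zero,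
    iteratedDerivWithin_one, Nat.factorial, zero_add] at p4 p3 q4 q3
  norm_num at p4 p3 q4 q3
  generalize gridx N i = x at *
  generalize hmesh N = h at *
  generalize f (x + h) = p at *
  generalize f (x - h) = q at *
  generalize f x = z at *
  generalize derivWithin f (Set.Icc 0 1) x = d1 at *
  generalize iteratedDerivWithin 2 f (Set.Icc 0 1) x = d2 at *
  generalize iteratedDerivWithin 3 f (Set.Icc 0 1) x = d3 at *
  have e1 : |(p + q - 2 * z - d2 * h ^ 2) / h ^ 2| ≤ 2 * K * h ^ 2 := by
    rw [abs_div, abs_of_pos (pow_pos hh 2), div_le_iff₀ (by positivity), abs_le]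
    constructor <;> linarith
  have e2 : |(p - q - 2 * d1 * h) / (2 * h)| ≤ K * h ^ 2 := by
    rw [abs_div, abs_of_pos (by positivity : 0 < 2 * h), div_le_iff₀ (by positivity), abs_le]
    constructor <;> linarith
  have key : x * ((2 * z - q - p) / h ^ 2 - x⁻¹ * ((p - q) / (2 * h)) + d2 + 1 / x * d1)
      = -(x * ((p + q - 2 * z - d2 * h ^ 2) / h ^ 2)) - (p - q - 2 * d1 * h) / (2 * h) := by
    field_simp
    ring
  rw [key]
  refine (abs_sub _ _).trans ?_
  rw [abs_neg, abs_mul, abs_of_pos hx]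
  have := mul_le_mul hxI.2 e1 (abs_nonneg _) zero_le_one
  linarith

/-- Consistency of one step of the scheme, where the nonlinear coefficient is evaluated at an
arbitrary grid function `v`. -/
theorem abs_gridx_mul_residual_le {T K : ℝ} (hT : 0 < T) {u : ℝ → ℝ → ℝ}
    (hbc : ∀ t ∈ Set.Icc (0 : ℝ) T, u 0 t = 0 ∧ u 1 t = 0)
    (hsmx : ∀ t ∈ Set.Icc (0 : ℝ) T, ContDiffOn ℝ 4 (fun x => u x t) (Set.Icc 0 1))
    (hsmt : ∀ x ∈ Set.Icc (0 : ℝ) 1, ContDiffOn ℝ 2 (fun t => u x t) (Set.Icc 0 T))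
    (hK : ∀ x ∈ Set.Icc (0 : ℝ) 1, ∀ t ∈ Set.Icc (0 : ℝ) T,
      (∀ j ≤ 4, |iteratedDerivWithin j (fun x' => u x' t) (Set.Icc 0 1) x| ≤ K) ∧
      (∀ j ≤ 2, |iteratedDerivWithin j (fun t' => u x t') (Set.Icc 0 T) t| ≤ K))
    (hpde : ∀ x ∈ Set.Ioc (0 : ℝ) 1, ∀ t ∈ Set.Ioc (0 : ℝ) T,
      derivWithin (fun t' => u x t') (Set.Icc 0 T) t =
        iteratedDerivWithin 2 (fun x' => u x' t) (Set.Icc 0 1) x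
          + (1 / x) * derivWithin (fun x' => u x' t) (Set.Icc 0 1) x
          - Real.sin (2 * u x t) / (2 * x ^ 2))
    {N : ℕ} {t dt : ℝ} (ht : 0 ≤ t) (hdt : 0 < dt) (htT : t + dt ≤ T) (v : Fin N → ℝ)
    (i : Fin N) :
    |gridx N i * ((stepMat N dt v).mulVec (fun j => u (gridx N j) (t + dt)) i
        - u (gridx N i) t)| ≤
      dt * (2 * K * |u (gridx N i) t - v i| + (4 * K + 2 * K ^ 2) * (dt + hmesh N ^ 2)) := by
  have hx := gridx_pos N i
  have hxI := gridx_mem_Icc N i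
  have htI : t ∈ Set.Icc 0 T := ⟨ht, by linarith⟩
  have hsI : t + dt ∈ Set.Icc 0 T := ⟨by linarith, htT⟩
  have hK0 : 0 ≤ K := (abs_nonneg _).trans ((hK _ hxI _ htI).1 0 (by norm_num))
  have hspace := abs_gridx_mul_matC_add_le (N := N) (hbc _ hsI).1 (hbc _ hsI).2 (hsmx _ hsI)
    (fun x hx => (hK x hx _ hsI).1) i
  have hsmx1 : ContDiffOn ℝ (1 : ℕ) (fun x => u x (t + dt)) (Set.Icc 0 1) :=
    (hsmx _ hsI).of_le (by norm_num)
  have hsmt1 : ContDiffOn ℝ (1 : ℕ) (fun t => u (gridx N i) t) (Set.Icc 0 T) :=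
    (hsmt _ hxI).of_le (by norm_num)
  have hsmt2 : ContDiffOn ℝ (2 : ℕ) (fun t => u (gridx N i) t) (Set.Icc 0 T) := hsmt _ hxI
  have hlin := hsmx1.abs_sub_taylor_le zero_lt_one 1
    (fun y hy => (hK y hy _ hsI).1 1 (by norm_num)) ⟨le_rfl, zero_le_one⟩ hxI
  have htime1 := hsmt1.abs_sub_taylor_le hT 1
    (fun y hy => (hK _ hxI y hy).2 1 (by norm_num)) hsI htI
  have htime2 := hsmt2.abs_sub_taylor_le hT 2
    (fun y hy => (hK _ hxI y hy).2 2 (by norm_num)) hsI htI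
  have hequ := hpde _ ⟨hx, hxI.2⟩ _ ⟨by linarith, htT⟩
  have hdiff : t - (t + dt) = -dt := by ring
  rw [hdiff, abs_neg, abs_of_pos hdt] at htime1 htime2
  simp only [Finset.sum_range_succ, Finset.sum_range_zero, iteratedDerivWithin_zero,
    iteratedDerivWithin_one, Nat.factorial, zero_add] at hlin htime1 htime2
  norm_num [(hbc _ hsI).1] at hlin htime1 htime2
  rw [abs_of_pos hx] at hlin
  rw [stepMat_mulVec]
  set x := gridx N i
  set U' := u x (t + dt)
  set U := u x t
  set c := (matC N).mulVec (fun j => u (gridx N j) (t + dt)) i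
  set ut := derivWithin (fun t' => u x t') (Set.Icc 0 T) (t + dt)
  set d := iteratedDerivWithin 2 (fun x' => u x' (t + dt)) (Set.Icc 0 1) x
  set d1 := derivWithin (fun x' => u x' (t + dt)) (Set.Icc 0 1) x
  have hsin : Real.sin (2 * U') / (2 * x ^ 2) = gfun U' * U' / x ^ 2 := by
    rw [gfun_mul_self]
    field_simp
  rw [hsin] at hequ
  have hsplit : x * (U' + dt * (c + gfun (v i) * U' / x ^ 2) - U) =
      -(x * (U - (U' + -(ut * dt)))) + dt * (x * (c + d + 1 / x * d1))
        + dt * ((gfun (v i) - gfun U') * (U' / x)) := by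
    rw [hequ]
    field_simp
    ring
  have hnl : |(gfun (v i) - gfun U') * (U' / x)| ≤ 2 * (|U - v i| + K * dt) * K := by
    rw [abs_mul]
    refine mul_le_mul ?_ ?_ (abs_nonneg _) (by positivity)
    · refine (abs_gfun_sub_gfun_le _ _).trans ?_
      have := abs_sub_le (v i) U U'
      rw [abs_sub_comm (v i) U] at this
      linarith
    · rw [abs_div, abs_of_pos hx, div_le_iff₀ hx]
      exact hlin
  have hxt := mul_le_mul hxI.2 htime2 (abs_nonneg _) zero_le_one
  rw [hsplit]
  refine (abs_add_three _ _ _).trans ?_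
  rw [abs_neg, abs_mul x, abs_of_pos hx, abs_mul dt, abs_mul dt, abs_of_pos hdt]
  have b1 := mul_le_mul_of_nonneg_left hspace hdt.le
  have b2 := mul_le_mul_of_nonneg_left hnl hdt.le
  have b3 : 0 ≤ K * dt ^ 2 := by positivity
  have b4 : 0 ≤ K * dt * hmesh N ^ 2 := by positivity
  have b5 : 0 ≤ K ^ 2 * dt * hmesh N ^ 2 := by positivity
  linarith

theorem hmesh_mul_sum_gridx_le_one (N : ℕ) : hmesh N * ∑ i, gridx N i ≤ 1 := by
  have h : ∑ i, gridx N i ≤ N := by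
    simpa using Finset.sum_le_sum fun i (_ : i ∈ Finset.univ) => (gridx_mem_Icc N i).2
  calc hmesh N * ∑ i, gridx N i ≤ hmesh N * N := by
        have := hmesh_pos N
        gcongr
    _ ≤ 1 := by
        rw [mul_comm]
        exact (natCast_mul_hmesh_mem_Icc (N := N) (k := N) (by omega)).2

/-- Weighted energy estimate for one step of the scheme. -/
theorem sum_gridx_sq_le_of_stepMat {N : ℕ} {dt a P R s : ℝ} (hdt : 0 ≤ dt) (ha : 0 < a)
    {w E e : Fin N → ℝ} (hw : ∀ i, a ≤ gfun (w i))
    (hres : ∀ i, |gridx N i * ((stepMat N dt w).mulVec E i - e i)| ≤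
      dt * (P * |e i| + R * s)) :
    hmesh N * ∑ i, gridx N i * E i ^ 2 ≤
      (1 + dt * ((P ^ 2 + R ^ 2) / a)) * (hmesh N * ∑ i, gridx N i * e i ^ 2)
        + dt * ((P ^ 2 + R ^ 2) / a) * s ^ 2 := by
  set Q := (P ^ 2 + R ^ 2) / a with hQ
  have hQ0 : 0 ≤ Q := by positivity
  have hpt : ∀ i, gridx N i * E i ^ 2 + 2 * dt * (gridx N i * (matC N).mulVec E i * E i) ≤
      gridx N i * e i ^ 2 + dt * Q * (gridx N i * e i ^ 2) + dt * Q * s ^ 2 * gridx N i := by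
    intro i
    have hx := gridx_pos N i
    have h := hres i
    rw [stepMat_mulVec] at h
    have hg := hw i
    set x := gridx N i
    set c := (matC N).mulVec E i
    have hyoung : |E i| * (P * |e i| + R * s) ≤
        a * E i ^ 2 / x + x * (Q * (e i ^ 2 + s ^ 2)) / 2 := by
      have hPR : (P * |e i| + R * s) ^ 2 ≤ (P ^ 2 + R ^ 2) * (e i ^ 2 + s ^ 2) := by
        rw [← sq_abs (e i)]
        nlinarith [sq_nonneg (P * s - R * |e i|)]
      have hQa : Q * a = P ^ 2 + R ^ 2 := by rw [hQ]; field_simp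
      rw [← hQa] at hPR
      rw [← sq_abs (E i), div_add_div _ _ hx.ne' two_ne_zero, le_div_iff₀ (by positivity)]
      generalize |E i| = y at *
      generalize P * |e i| + R * s = r at *
      generalize e i ^ 2 + s ^ 2 = σ at *
      have h1 : 0 ≤ (2 * a * y - x * r) ^ 2 := sq_nonneg _
      have h2 := mul_le_mul_of_nonneg_left hPR (sq_nonneg x)
      have h3 : 0 ≤ x ^ 2 * (Q * a * σ) := (by positivity : 0 ≤ x ^ 2 * r ^ 2).trans h2
      refine le_of_mul_le_mul_left ?_ ha
      nlinarith
    have hres' : E i * (x * (E i + dt * (c + gfun (w i) * E i / x ^ 2) - e i)) ≤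
        dt * (a * E i ^ 2 / x + x * (Q * (e i ^ 2 + s ^ 2)) / 2) := by
      calc _ ≤ |E i| * |x * (E i + dt * (c + gfun (w i) * E i / x ^ 2) - e i)| := by
            rw [← abs_mul]; exact le_abs_self _
        _ ≤ |E i| * (dt * (P * |e i| + R * s)) := by gcongr
        _ = dt * (|E i| * (P * |e i| + R * s)) := by ring
        _ ≤ _ := by gcongr
    have hexp : E i * (x * (E i + dt * (c + gfun (w i) * E i / x ^ 2) - e i)) =
        x * E i ^ 2 + dt * (x * c * E i) + dt * (gfun (w i) * E i ^ 2 / x) - x * (E i * e i) := by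
      field_simp
      ring
    have hdiss : dt * (a * E i ^ 2 / x) ≤ dt * (gfun (w i) * E i ^ 2 / x) := by gcongr
    have hcross := mul_nonneg hx.le (sq_nonneg (E i - e i))
    rw [hexp] at hres'
    nlinarith
  have hsum := Finset.sum_le_sum fun i (_ : i ∈ Finset.univ) => hpt i
  simp only [Finset.sum_add_distrib, ← Finset.mul_sum] at hsum
  have hh := hmesh_pos N
  have hC := mul_nonneg (mul_nonneg zero_le_two hdt) (sum_gridx_mul_matC_mulVec_nonneg E)
  have hmul := mul_le_mul_of_nonneg_left hsum hh.le
  have hCh := mul_nonneg hh.le hC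
  have hgrid := mul_le_mul_of_nonneg_left (hmesh_mul_sum_gridx_le_one N)
    (show 0 ≤ dt * Q * s ^ 2 by positivity)
  linarith

/-- Discrete Grönwall inequality in exponential form. -/
theorem le_exp_mul_of_step_le {M : ℕ} {y : ℕ → ℝ} {q s : ℝ} (hq : 0 ≤ q) (h0 : y 0 = 0)
    (hs : 0 ≤ s) (hstep : ∀ n < M, y (n + 1) ≤ (1 + q) * y n + q * s) :
    ∀ n ≤ M, y n ≤ Real.exp (n * q) * s := by
  have h : ∀ n ≤ M, y n + s ≤ Real.exp (n * q) * s := by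
    intro n
    induction n with
    | zero => intro _; simp [h0]
    | succ n ih =>
      intro hn
      have h1 := ih (by omega)
      have h2 := hstep n (by omega)
      have h3 : 1 + q ≤ Real.exp q := by linarith [Real.add_one_le_exp q]
      calc y (n + 1) + s ≤ (1 + q) * (y n + s) := by linarith
        _ ≤ (1 + q) * (Real.exp (n * q) * s) := by gcongr
        _ ≤ Real.exp q * (Real.exp (n * q) * s) := by gcongr
        _ = Real.exp ((n + 1 : ℕ) * q) * s := by
            rw [← mul_assoc, ← Real.exp_add]
            push_cast
            ring_nf
  intro n hn
  linarith [h n hn]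

/-- On every mesh with an interior point, `h²` is dominated by `h² |ln h|^{1/2}`. -/
theorem hmesh_sq_le {N : ℕ} (hN : 1 ≤ N) :
    hmesh N ^ 2 ≤ 2 * (hmesh N ^ 2 * Real.sqrt |Real.log (hmesh N)|) := by
  have hN' : (2 : ℝ) ≤ (N : ℝ) + 1 := by
    have : (1 : ℝ) ≤ N := by exact_mod_cast hN
    linarith
  have hlog : Real.log 2 ≤ |Real.log (hmesh N)| := by
    rw [hmesh, one_div, Real.log_inv, abs_neg]
    exact (Real.log_le_log (by norm_num) hN').trans (le_abs_self _)
  have hsqrt : 1 / 2 ≤ Real.sqrt |Real.log (hmesh N)| := by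
    refine Real.le_sqrt_of_sq_le ?_
    linarith [Real.log_two_gt_d9]
  nlinarith [sq_nonneg (hmesh N)]

/-- Discretization error bound for the semi-implicit Euler finite difference scheme
applied to the radially symmetric harmonic map heat flow equation: for a sufficiently
smooth solution `u` with `sup_x |u(x,0)| ≤ c_α` (where `α ∈ (1/2,1)` and
`sin(2c_α)/(2c_α) = α²`, `c_α ∈ (0,π/2]`), there is a constant `c > 0` such that for all
`N, M ≥ 1` (with `h = 1/(N+1)`, `Δt = T/M`) the error `eⁿ` between the grid restriction
of `u` at time `nΔt` and the scheme iterate `uⁿ` satisfies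
`‖eⁿ‖_{D,h} ≤ c(Δt + h²|ln h|^{1/2})` for `1 ≤ n ≤ M`. -/
theorem stmt13 (T : ℝ) (hT : 0 < T) (α : ℝ) (hα : α ∈ Set.Ioo (1 / 2 : ℝ) 1)
    (cα : ℝ) (hcα : cα ∈ Set.Ioc (0 : ℝ) (π / 2))
    (hceq : Real.sin (2 * cα) / (2 * cα) = α ^ 2)
    (u : ℝ → ℝ → ℝ)
    (hbc : ∀ t ∈ Set.Icc (0 : ℝ) T, u 0 t = 0 ∧ u 1 t = 0)
    (hsmx : ∀ t ∈ Set.Icc (0 : ℝ) T, ContDiffOn ℝ 4 (fun x => u x t) (Set.Icc 0 1))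
    (hsmt : ∀ x ∈ Set.Icc (0 : ℝ) 1, ContDiffOn ℝ 2 (fun t => u x t) (Set.Icc 0 T))
    (hbdd : ∃ K : ℝ, ∀ x ∈ Set.Icc (0 : ℝ) 1, ∀ t ∈ Set.Icc (0 : ℝ) T,
      (∀ j ≤ 4, |iteratedDerivWithin j (fun x' => u x' t) (Set.Icc 0 1) x| ≤ K) ∧
      (∀ j ≤ 2, |iteratedDerivWithin j (fun t' => u x t') (Set.Icc 0 T) t| ≤ K))
    (hpde : ∀ x ∈ Set.Ioc (0 : ℝ) 1, ∀ t ∈ Set.Ioc (0 : ℝ) T,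
      derivWithin (fun t' => u x t') (Set.Icc 0 T) t =
        iteratedDerivWithin 2 (fun x' => u x' t) (Set.Icc 0 1) x
          + (1 / x) * derivWithin (fun x' => u x' t) (Set.Icc 0 1) x
          - Real.sin (2 * u x t) / (2 * x ^ 2))
    (hinit : ∀ x ∈ Set.Icc (0 : ℝ) 1, |u x 0| ≤ cα) :
    ∃ c : ℝ, 0 < c ∧ ∀ N : ℕ, 1 ≤ N → ∀ M : ℕ, 1 ≤ M →
      ∀ uh : ℕ → Fin N → ℝ,
        uh 0 = (fun i => u (gridx N i) 0) →
        (∀ n, (stepMat N (T / M) (uh n)).mulVec (uh (n + 1)) = uh n) →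
        ∀ n : ℕ, 1 ≤ n → n ≤ M →
          normDh N (fun i => u (gridx N i) (n * (T / M)) - uh n i) ≤
            c * (T / M + hmesh N ^ 2 * Real.sqrt |Real.log (hmesh N)|) := by
  obtain ⟨K, hK⟩ := hbdd
  have ha : 0 < α ^ 2 := by
    have := hα.1
    positivity
  set Q := ((2 * K) ^ 2 + (4 * K + 2 * K ^ 2) ^ 2) / α ^ 2
  have hQ : 0 ≤ Q := by positivity
  refine ⟨2 * Real.exp (T * Q), by positivity, ?_⟩
  intro N hN M hM uh huh0 huh n _ hnM
  have hM0 : (0 : ℝ) < M := by exact_mod_cast hM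
  set dt := T / M with hdt_def
  have hdt : 0 < dt := by positivity
  have hMdt : M * dt = T := by rw [hdt_def]; field_simp
  set s := dt + hmesh N ^ 2
  have hs : 0 ≤ s := by positivity
  have hle : ∀ n i, |uh n i| ≤ cα := by
    intro n
    induction n with
    | zero => intro i; rw [huh0]; exact hinit _ (gridx_mem_Icc N i)
    | succ n ih =>
      refine abs_le_of_stepMat_mulVec_eq hdt.le (fun i => ?_) (huh n) ih
      exact ha.le.trans (hceq ▸ le_gfun_of_abs_le hcα (ih i))
  have hstep : ∀ n < M,
      hmesh N * ∑ i, gridx N i * (u (gridx N i) ((n + 1 : ℕ) * dt) - uh (n + 1) i) ^ 2 ≤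
        (1 + dt * Q) * (hmesh N * ∑ i, gridx N i * (u (gridx N i) (n * dt) - uh n i) ^ 2)
          + dt * Q * s ^ 2 := by
    intro n hn
    refine sum_gridx_sq_le_of_stepMat hdt.le ha
      (fun i => hceq ▸ le_gfun_of_abs_le hcα (hle n i)) fun i => ?_
    have htT : (n : ℝ) * dt + dt ≤ T := by
      have : (n : ℝ) + 1 ≤ M := by exact_mod_cast hn
      rw [← hMdt]
      nlinarith
    have hres := abs_gridx_mul_residual_le hT hbc hsmx hsmt hK hpde (t := n * dt)
      (by positivity) hdt htT (uh n) i
    have hsub : (fun i => u (gridx N i) ((n + 1 : ℕ) * dt) - uh (n + 1) i) =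
        (fun i => u (gridx N i) (n * dt + dt)) - uh (n + 1) := by
      funext j
      simp only [Pi.sub_apply, Nat.cast_succ, add_mul, one_mul]
    rw [hsub, Matrix.mulVec_sub, huh n, Pi.sub_apply, sub_sub_sub_cancel_right]
    exact hres
  have henergy := le_exp_mul_of_step_le
    (y := fun n => hmesh N * ∑ i, gridx N i * (u (gridx N i) (n * dt) - uh n i) ^ 2)
    (mul_nonneg hdt.le hQ) (by simp [huh0]) (sq_nonneg s) hstep n hnM
  have hexp : Real.exp (n * (dt * Q)) ≤ Real.exp (T * Q) ^ 2 := by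
    rw [← Real.exp_nat_mul, Real.exp_le_exp, ← mul_assoc, ← mul_assoc]
    have hnM' : (n : ℝ) ≤ M := by exact_mod_cast hnM
    refine mul_le_mul_of_nonneg_right ?_ hQ
    push_cast
    nlinarith
  have hnorm : normDh N (fun i => u (gridx N i) (n * dt) - uh n i) ≤ Real.exp (T * Q) * s := by
    refine Real.sqrt_le_iff.2 ⟨by positivity, henergy.trans ?_⟩
    rw [mul_pow]
    gcongr
  refine hnorm.trans ?_
  rw [mul_comm 2, mul_assoc]
  have := hmesh_sq_le hN
  gcongr
  linarith
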